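/- arXiv:0904.4569 — 2 statements merged into one kernel-verified Lean document; each statement's English description precedes it below -/
import Mathlib

section
/- Let N ≥ 1, i ∈ ℕ and α ∈ ℕ^N a multiindex. Then as t → 0⁺ the quantity (4πt)^{−N/2} t^{−i} ∫_{ℝ^N} exp(−‖x‖²/(4t)) x^α dx converges, with limit equal to 0 if α is odd; equal to 0 if α is even and i < |α|/2; and equal to α!/(α/2)! if α is even and i = |α|/2. -/
/-!
In the coordinates of `Fin N → ℝ` the integrand is a product of functions of one variable, so by
Fubini the integral is a product of one-dimensional Gaussian moments. An odd moment vanishes by the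
symmetry `x ↦ -x` (`gaussian_moment_odd`). The moment of order `2k` is a Gamma integral at the
half-integer `k + 1/2`, with value `(4πt)^{1/2} t^k (2k)!/k!` (`gaussian_moment_even`).

Hence the rescaled integral vanishes identically on `t > 0` for odd `α`, and for even `α` it equals
`t^{|α|/2 - i} α!/(α/2)!` (`rescaled_moment_even`), which tends to `0` when `i < |α|/2` and is
constant when `i = |α|/2`.
-/

open MeasureTheory Filter Topology

lemma gaussian_moment_odd (b : ℝ) {n : ℕ} (hn : ¬ Even n) :
    ∫ x : ℝ, Real.exp (-x ^ 2 / b) * x ^ n = 0 := by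
  have h := integral_neg_eq_self (fun x : ℝ => Real.exp (-x ^ 2 / b) * x ^ n) volume
  simp only [even_two.neg_pow, (Nat.not_even_iff_odd.mp hn).neg_pow, mul_neg, integral_neg] at h
  linarith

/-- `(2k)! = 2^k k! (2k-1)!!`, with the truncated `2 * 0 - 1 = 0` harmless since `0‼ = 1`. -/
lemma factorial_two_mul_eq (k : ℕ) :
    (2 * k).factorial = 2 ^ k * k.factorial * (2 * k - 1).doubleFactorial := by
  cases k with
  | zero => simp
  | succ k =>
    have h := Nat.factorial_eq_mul_doubleFactorial (2 * k + 1)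
    rw [← Nat.doubleFactorial_two_mul (k + 1)]
    exact h

lemma gaussian_moment_even {t : ℝ} (ht : 0 < t) (k : ℕ) :
    ∫ x : ℝ, Real.exp (-x ^ 2 / (4 * t)) * x ^ (2 * k) =
      (4 * Real.pi * t) ^ (1 / 2 : ℝ) * (t ^ k * ((2 * k).factorial / k.factorial)) := by
  have hb : 0 < (4 * t)⁻¹ := by positivity
  have h := integral_rpow_mul_exp_neg_mul_rpow (p := 2) (q := ((2 * k : ℕ) : ℝ)) two_pos
    (by linarith [(Nat.cast_nonneg (2 * k) : (0 : ℝ) ≤ _)]) hb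
  have habs := integral_comp_abs (f := fun x : ℝ => Real.exp (-x ^ 2 / (4 * t)) * x ^ (2 * k))
  simp only [sq_abs, (even_two_mul k).pow_abs] at habs
  have hI : ∫ x in Set.Ioi (0 : ℝ), Real.exp (-x ^ 2 / (4 * t)) * x ^ (2 * k) =
      ∫ x in Set.Ioi (0 : ℝ), x ^ ((2 * k : ℕ) : ℝ) * Real.exp (-(4 * t)⁻¹ * x ^ (2 : ℝ)) := by
    congr 1
    ext x
    rw [Real.rpow_natCast, Real.rpow_two, mul_comm]
    congr 2
    ring
  have hpow : ((4 * t)⁻¹) ^ (-(((2 * k : ℕ) : ℝ) + 1) / 2) = (4 * t) ^ k * √(4 * t) := by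
    rw [Real.inv_rpow (by positivity), ← Real.rpow_neg (by positivity), Real.sqrt_eq_rpow,
      ← Real.rpow_natCast, ← Real.rpow_add (by positivity)]
    congr 1
    push_cast
    ring
  have hg : (((2 * k : ℕ) : ℝ) + 1) / 2 = k + 1 / 2 := by
    push_cast
    ring
  have hs : √(4 * Real.pi * t) = √(4 * t) * √Real.pi := by
    rw [← Real.sqrt_mul (by positivity)]
    congr 1
    ring
  rw [habs, hI, h, hpow, hg, Real.Gamma_nat_add_half, ← Real.sqrt_eq_rpow, hs,
    factorial_two_mul_eq]
  have h4 : (4 : ℝ) ^ k = 2 ^ k * 2 ^ k := by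
    rw [← mul_pow]
    norm_num
  rw [mul_pow, h4]
  push_cast
  field_simp

lemma integral_gaussian_monomial (N : ℕ) (α : Fin N → ℕ) (b : ℝ) :
    ∫ x : EuclideanSpace ℝ (Fin N), Real.exp (-‖x‖ ^ 2 / b) * ∏ j, x j ^ α j =
      ∏ j, ∫ x : ℝ, Real.exp (-x ^ 2 / b) * x ^ α j := by
  rw [← (PiLp.volume_preserving_toLp (Fin N)).integral_comp
    (MeasurableEquiv.toLp 2 (Fin N → ℝ)).measurableEmbedding,
    ← integral_fintype_prod_volume_eq_prod]
  congr 1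
  ext x
  rw [Finset.prod_mul_distrib, ← Real.exp_sum, EuclideanSpace.norm_sq_eq, ← Finset.sum_div,
    Finset.sum_neg_distrib]
  simp

/-- For even `α` the rescaled moment is exactly `t^{|α|/2 - i} α!/(α/2)!`. -/
lemma rescaled_moment_even {N : ℕ} (i : ℕ) (α : Fin N → ℕ) (hα : ∀ j, Even (α j))
    {t : ℝ} (ht : 0 < t) :
    (4 * Real.pi * t) ^ (-(N : ℝ) / 2) * t ^ (-(i : ℤ)) *
        ∫ x : EuclideanSpace ℝ (Fin N), Real.exp (-‖x‖ ^ 2 / (4 * t)) * ∏ j, x j ^ α j =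
      t ^ (-(i : ℤ)) * t ^ (∑ j, α j / 2) *
        (((∏ j, Nat.factorial (α j) : ℕ) : ℝ) / ((∏ j, Nat.factorial (α j / 2) : ℕ) : ℝ)) := by
  have hpos : 0 < 4 * Real.pi * t := by positivity
  have hj (j : Fin N) : ∫ x : ℝ, Real.exp (-x ^ 2 / (4 * t)) * x ^ α j =
      (4 * Real.pi * t) ^ (1 / 2 : ℝ) *
        (t ^ (α j / 2) * ((α j).factorial / (α j / 2).factorial)) := by
    have h := gaussian_moment_even ht (α j / 2)
    rwa [Nat.two_mul_div_two_of_even (hα j)] at h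
  have hc : (4 * Real.pi * t) ^ (-(N : ℝ) / 2) * ((4 * Real.pi * t) ^ (1 / 2 : ℝ)) ^ N = 1 := by
    rw [← Real.rpow_natCast, ← Real.rpow_mul hpos.le, ← Real.rpow_add hpos]
    ring_nf
    exact Real.rpow_zero _
  rw [integral_gaussian_monomial, Finset.prod_congr rfl fun j _ => hj j, Finset.prod_mul_distrib,
    Finset.prod_mul_distrib, Finset.prod_div_distrib, Finset.prod_pow_eq_pow_sum,
    Finset.prod_const, Finset.card_univ, Fintype.card_fin]
  push_cast
  linear_combination (t ^ (-(i : ℤ)) * (t ^ (∑ j, α j / 2) *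
    ((∏ j, ((α j).factorial : ℝ)) / ∏ j, ((α j / 2).factorial : ℝ)))) * hc

/-- As `t → 0⁺`, `(4πt)^{-N/2} t^{-i} ∫ exp(-‖x‖²/4t) x^α dx` converges: to `0`
if `α` is odd; to `0` if `α` is even and `i < |α|/2`; and to `α!/(α/2)!` if `α` is even and
`i = |α|/2`. -/
theorem gaussian_moments_limit (N : ℕ) (hN : 1 ≤ N) (i : ℕ) (α : Fin N → ℕ) :
    ((∃ j, ¬ Even (α j)) →
      Tendsto (fun t : ℝ => (4 * Real.pi * t) ^ (-(N : ℝ) / 2) * t ^ (-(i : ℤ)) *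
          ∫ x : EuclideanSpace ℝ (Fin N), Real.exp (-‖x‖ ^ 2 / (4 * t)) * ∏ j, x j ^ α j)
        (𝓝[>] 0) (𝓝 0)) ∧
    ((∀ j, Even (α j)) → 2 * i < ∑ j, α j →
      Tendsto (fun t : ℝ => (4 * Real.pi * t) ^ (-(N : ℝ) / 2) * t ^ (-(i : ℤ)) *
          ∫ x : EuclideanSpace ℝ (Fin N), Real.exp (-‖x‖ ^ 2 / (4 * t)) * ∏ j, x j ^ α j)
        (𝓝[>] 0) (𝓝 0)) ∧
    ((∀ j, Even (α j)) → 2 * i = ∑ j, α j →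
      Tendsto (fun t : ℝ => (4 * Real.pi * t) ^ (-(N : ℝ) / 2) * t ^ (-(i : ℤ)) *
          ∫ x : EuclideanSpace ℝ (Fin N), Real.exp (-‖x‖ ^ 2 / (4 * t)) * ∏ j, x j ^ α j)
        (𝓝[>] 0)
        (𝓝 (((∏ j, Nat.factorial (α j) : ℕ) : ℝ) /
              ((∏ j, Nat.factorial (α j / 2) : ℕ) : ℝ)))) := by
  have hsum (hα : ∀ j, Even (α j)) : ∑ j, α j = 2 * ∑ j, α j / 2 := by
    rw [Finset.mul_sum]
    exact Finset.sum_congr rfl fun j _ => (Nat.two_mul_div_two_of_even (hα j)).symm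
  refine ⟨?_, ?_, ?_⟩
  · rintro ⟨j, hj⟩
    refine tendsto_const_nhds.congr fun t => ?_
    rw [integral_gaussian_monomial, Finset.prod_eq_zero (Finset.mem_univ j)
      (gaussian_moment_odd (4 * t) hj), mul_zero]
  · intro hα hi
    rw [hsum hα] at hi
    obtain ⟨m, hm⟩ : ∃ m, ∑ j, α j / 2 = i + (m + 1) :=
      ⟨∑ j, α j / 2 - i - 1, by omega⟩
    set C : ℝ := ((∏ j, Nat.factorial (α j) : ℕ) : ℝ) / ((∏ j, Nat.factorial (α j / 2) : ℕ) : ℝ)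
    have hlim : Tendsto (fun t : ℝ => t ^ (m + 1) * C) (𝓝[>] 0) (𝓝 0) := by
      have hcont : Continuous fun t : ℝ => t ^ (m + 1) * C := by fun_prop
      simpa using (hcont.tendsto 0).mono_left nhdsWithin_le_nhds
    refine hlim.congr' ?_
    filter_upwards [self_mem_nhdsWithin] with t ht
    have ht0 : t ≠ 0 := (Set.mem_Ioi.mp ht).ne'
    rw [rescaled_moment_even i α hα ht, hm, pow_add t i, zpow_neg, zpow_natCast,
      inv_mul_cancel_left₀ (pow_ne_zero _ ht0)]
  · intro hα hi
    rw [hsum hα] at hi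
    refine tendsto_const_nhds.congr' ?_
    filter_upwards [self_mem_nhdsWithin] with t ht
    have ht0 : t ≠ 0 := (Set.mem_Ioi.mp ht).ne'
    rw [rescaled_moment_even i α hα ht, ← Nat.eq_of_mul_eq_mul_left two_pos hi, zpow_neg,
      zpow_natCast, inv_mul_cancel₀ (pow_ne_zero _ ht0), one_mul]
end

section
/- Let N ≥ 1, i ∈ ℕ and let φ : ℝ^N → ℝ be a smooth compactly supported function. Assume that the iterated partial derivatives (∂^α φ)(0) vanish for every even multiindex α with |α| < 2i. Then lim_{t→0⁺} (4πt)^{−N/2} t^{−i} ∫_{ℝ^N} exp(−‖x‖²/(4t)) φ(x) dx = Σ_{|α| = 2i, α even} (∂^α φ)(0)/(α/2)!. -/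
/-!
After the substitution `x = √t y`, the normalised integral `(4πt)^{-N/2} ∫ exp(-‖x‖²/4t) φ(x) dx`
is the value `u(t)` at the origin of the solution of the heat equation with initial datum `φ`
(`heatAtZero`, `heatAtZero_eq`). Differentiating under the integral sign and integrating by parts
against the Gaussian gives `u_φ' = u_{Δφ}` on `t > 0` (`hasDerivAt_heatAtZero`), while
`u_φ(t) → φ(0)` as `t → 0⁺` by dominated convergence (`tendsto_heatAtZero`). Hence, if
`Δ^k φ(0) = 0` for all `k < i`, then `i` applications of L'Hôpital's rule give
`u_φ(t) / t^i → Δ^i φ(0) / i!` (`tendsto_heatAtZero_div_pow`).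

Since the partial derivatives commute on smooth functions, the multinomial theorem expands
`Δ^k = (Σ_j ∂_j²)^k` as `Σ_{|β| = k} (k!/β!) ∂^{2β}` (`lap_pow_apply`). This shows both that the
hypothesis on `φ` makes `Δ^k φ(0)` vanish for `k < i`, and that `Δ^i φ(0) / i!` is the sum in the
statement, with `α = 2β` (`lap_pow_div_factorial`).
-/


open MeasureTheory Filter Topology

noncomputable section

/-- The partial derivative `∂_j φ` of a function on `ℝ^N`. -/
def partialDeriv (N : ℕ) (j : Fin N) (φ : EuclideanSpace ℝ (Fin N) → ℝ) :
    EuclideanSpace ℝ (Fin N) → ℝ :=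
  fun x => fderiv ℝ φ x (EuclideanSpace.single j 1)

/-- The iterated partial derivative `∂^α φ = ∂_1^{α_1} ⋯ ∂_N^{α_N} φ`. -/
def multiPartialDeriv (N : ℕ) (α : Fin N → ℕ) (φ : EuclideanSpace ℝ (Fin N) → ℝ) :
    EuclideanSpace ℝ (Fin N) → ℝ :=
  (List.finRange N).foldr (fun j ψ => (partialDeriv N j)^[α j] ψ) φ

section Helpers

variable {N : ℕ}

/-! ### Powers of the Laplacian on test functions -/

/-- The space `C_c^∞(ℝ^N)` of test functions, as a subspace of all functions `ℝ^N → ℝ`. -/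
def testFn (N : ℕ) : Submodule ℝ (EuclideanSpace ℝ (Fin N) → ℝ) where
  carrier := {f | ContDiff ℝ (⊤ : ℕ∞) f ∧ HasCompactSupport f}
  add_mem' hf hg := ⟨hf.1.add hg.1, hf.2.add hg.2⟩
  zero_mem' := ⟨contDiff_const, HasCompactSupport.zero⟩
  smul_mem' c _ hf := ⟨contDiff_const.smul hf.1, hf.2.smul_left (f := fun _ => c)⟩

lemma partialDeriv_mem (j : Fin N) {f : EuclideanSpace ℝ (Fin N) → ℝ} (hf : f ∈ testFn N) :
    partialDeriv N j f ∈ testFn N :=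
  ⟨(hf.1.fderiv_right (m := (⊤ : ℕ∞)) (by simp)).clm_apply contDiff_const,
    hf.2.fderiv_apply (𝕜 := ℝ) _⟩

lemma testFn_differentiable (f : testFn N) : Differentiable ℝ f.1 :=
  f.2.1.differentiable (by simp)

/-- The partial derivative `∂_j` as a linear endomorphism of the test functions. -/
def pderiv (j : Fin N) : Module.End ℝ (testFn N) where
  toFun f := ⟨partialDeriv N j f.1, partialDeriv_mem j f.2⟩
  map_add' f g := by
    ext x
    simp [partialDeriv, fderiv_add (testFn_differentiable f x) (testFn_differentiable g x)]
  map_smul' c f := by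
    ext x
    simp [partialDeriv, fderiv_const_smul (testFn_differentiable f x)]

/-- The Laplacian `Σ_j ∂_j²` on the test functions. -/
def lap (N : ℕ) : Module.End ℝ (testFn N) := ∑ j, pderiv j ^ 2

lemma pderiv_apply (j : Fin N) (f : testFn N) (x : EuclideanSpace ℝ (Fin N)) :
    (pderiv j f).1 x = fderiv ℝ f.1 x (EuclideanSpace.single j 1) := rfl

lemma pderiv_pderiv_apply (j k : Fin N) (f : testFn N) (x : EuclideanSpace ℝ (Fin N)) :
    (pderiv j (pderiv k f)).1 x = fderiv ℝ (fderiv ℝ f.1) x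
      (EuclideanSpace.single j 1) (EuclideanSpace.single k 1) := by
  have h : DifferentiableAt ℝ (fderiv ℝ f.1) x :=
    (f.2.1.fderiv_right (m := (⊤ : ℕ∞)) (by simp)).differentiable (by simp) x
  have := fderiv_clm_apply h (differentiableAt_const (c := (EuclideanSpace.single k (1:ℝ))))
  rw [pderiv_apply]
  change fderiv ℝ (fun y => fderiv ℝ f.1 y (EuclideanSpace.single k 1)) x _ = _
  rw [this]
  simp

lemma pderiv_commute (j k : Fin N) : Commute (pderiv (N := N) j) (pderiv k) := by
  ext f x
  change (pderiv j (pderiv k f)).1 x = (pderiv k (pderiv j f)).1 x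
  rw [pderiv_pderiv_apply, pderiv_pderiv_apply]
  refine (f.2.1.contDiffAt.isSymmSndFDerivAt ?_) _ _
  simp only [minSmoothness_of_isRCLikeNormedField]
  exact WithTop.coe_le_coe.2 (le_top : (2 : ℕ∞) ≤ ⊤)

lemma coe_pderiv_pow (j : Fin N) (n : ℕ) (f : testFn N) :
    ((pderiv j ^ n) f).1 = (partialDeriv N j)^[n] f.1 := by
  induction n with
  | zero => rfl
  | succ n ih =>
    rw [pow_succ', Function.iterate_succ_apply', ← ih]
    rfl

lemma coe_list_prod (α : Fin N → ℕ) (l : List (Fin N)) (f : testFn N) :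
    ((l.map fun j => pderiv j ^ α j).prod f).1 =
      l.foldr (fun j ψ => (partialDeriv N j)^[α j] ψ) f.1 := by
  induction l with
  | nil => rfl
  | cons j l ih =>
    rw [List.map_cons, List.prod_cons, Module.End.mul_apply, coe_pderiv_pow, ih]
    rfl

/-- The multinomial theorem for the commuting operators `∂_j²`. -/
lemma lap_pow_apply (i : ℕ) (f : testFn N) (x : EuclideanSpace ℝ (Fin N)) :
    ((lap N ^ i) f).1 x = ∑ β ∈ Finset.piAntidiag Finset.univ i,
      (Nat.multinomial Finset.univ β : ℝ) * multiPartialDeriv N (fun j => 2 * β j) f.1 x := by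
  have hc : ((Finset.univ : Finset (Fin N)) : Set (Fin N)).Pairwise
      (Function.onFun Commute fun j => pderiv (N := N) j ^ 2) :=
    fun j _ k _ _ => (pderiv_commute j k).pow_pow 2 2
  rw [lap, Finset.sum_pow_eq_sum_piAntidiag_of_commute _ _ hc, LinearMap.sum_apply,
    Submodule.coe_sum, Finset.sum_apply]
  refine Finset.sum_congr rfl fun β _ => ?_
  have h : ∀ hc', Finset.noncommProd (Finset.univ : Finset (Fin N))
      (fun j => (pderiv (N := N) j ^ 2) ^ β j) hc' =
      ((List.finRange N).map fun j => pderiv j ^ (2 * β j)).prod := by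
    intro hc'
    exact (Finset.noncommProd_congr (List.toFinset_finRange N).symm
      (fun j _ => (pow_mul (pderiv (N := N) j) 2 (β j)).symm) hc').trans
      (Finset.noncommProd_toFinset _ _ _ (List.nodup_finRange N))
  rw [h, Module.End.mul_apply, multiPartialDeriv, ← coe_list_prod (fun j => 2 * β j),
    ← Nat.smul_one_eq_cast]
  simp

/-- Dividing by `i!` turns multinomial coefficients into `1 / β!`, and `α = 2β` reindexes the sum
over even multiindices. -/
lemma lap_pow_div_factorial (i : ℕ) (f : testFn N) (x : EuclideanSpace ℝ (Fin N)) :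
    ((lap N ^ i) f).1 x / (i.factorial : ℝ) =
      ∑ α ∈ (Finset.Nat.antidiagonalTuple N (2 * i)).filter (fun α => ∀ j, Even (α j)),
        multiPartialDeriv N α f.1 x / ((∏ j, Nat.factorial (α j / 2) : ℕ) : ℝ) := by
  rw [lap_pow_apply, Finset.sum_div]
  refine Finset.sum_bij' (fun β _ j => 2 * β j) (fun α _ j => α j / 2) ?_ ?_ ?_ ?_ ?_
  · intro β hβ
    simp only [Finset.mem_piAntidiag] at hβ
    simp [Finset.Nat.mem_antidiagonalTuple, ← Finset.mul_sum, hβ.1]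
  · intro α hα
    simp only [Finset.mem_filter, Finset.Nat.mem_antidiagonalTuple] at hα
    have h : 2 * ∑ j, α j / 2 = 2 * i := by
      rw [Finset.mul_sum, ← hα.1]
      exact Finset.sum_congr rfl fun j _ => Nat.two_mul_div_two_of_even (hα.2 j)
    simp only [Finset.mem_piAntidiag]
    exact ⟨by omega, fun _ _ => Finset.mem_univ _⟩
  · intro β _
    simp
  · intro α hα
    simp only [Finset.mem_filter] at hα
    exact funext fun j => Nat.two_mul_div_two_of_even (hα.2 j)
  · intro β hβ
    simp only [Finset.mem_piAntidiag] at hβ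
    have h := Nat.multinomial_spec Finset.univ β
    rw [hβ.1] at h
    have h1 : (∏ j, (β j).factorial : ℕ) ≠ 0 :=
      Finset.prod_ne_zero_iff.2 fun j _ => (β j).factorial_ne_zero
    simp only [Nat.mul_div_cancel_left _ two_pos]
    rw [← h, Nat.cast_mul]
    have h2 : (Nat.multinomial Finset.univ β : ℝ) ≠ 0 := by
      have : (Nat.multinomial Finset.univ β) ≠ 0 := by
        intro h0
        rw [h0, mul_zero] at h
        exact i.factorial_ne_zero h.symm
      exact_mod_cast this
    have h3 : ((∏ j, (β j).factorial : ℕ) : ℝ) ≠ 0 := by exact_mod_cast h1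
    field_simp

/-! ### The heat flow evaluated at the origin -/

/-- The heat kernel of `ℝ^N` at time `1`. -/
def heatKernel (N : ℕ) (y : EuclideanSpace ℝ (Fin N)) : ℝ :=
  (4 * Real.pi) ^ (-(N : ℝ) / 2) * Real.exp (-(1 / 4) * ‖y‖ ^ 2)

/-- The solution of the heat equation with initial datum `f`, evaluated at time `t` and at the
origin, written as `∫ G₁(y) f(√t y) dy` so that the singularity at `t = 0` disappears. -/
def heatAtZero (t : ℝ) (f : EuclideanSpace ℝ (Fin N) → ℝ) : ℝ :=
  ∫ y, heatKernel N y * f (√t • y)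

lemma continuous_heatKernel : Continuous (heatKernel N) := by
  unfold heatKernel
  fun_prop

lemma heatKernel_nonneg (y : EuclideanSpace ℝ (Fin N)) : 0 ≤ heatKernel N y := by
  unfold heatKernel
  positivity

lemma integrable_exp_neg_mul_sq_norm {b : ℝ} (hb : 0 < b) :
    Integrable fun y : EuclideanSpace ℝ (Fin N) => Real.exp (-b * ‖y‖ ^ 2) := by
  have h := (GaussianFourier.integrable_cexp_neg_mul_sq_norm_add
    (V := EuclideanSpace ℝ (Fin N)) (b := (b : ℂ)) (by simpa using hb) 0 0).norm
  refine h.congr (ae_of_all _ fun y => ?_)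
  simp only [Complex.norm_exp]
  congr 1
  simp [← Complex.ofReal_pow]

lemma integrable_heatKernel : Integrable (heatKernel N) :=
  (integrable_exp_neg_mul_sq_norm (by norm_num)).const_mul _

lemma integral_heatKernel : ∫ y, heatKernel N y = 1 := by
  unfold heatKernel
  rw [integral_const_mul, GaussianFourier.integral_rexp_neg_mul_sq_norm (by norm_num)]
  have h : Real.pi / (1 / 4) = 4 * Real.pi := by ring
  rw [h, finrank_euclideanSpace_fin, ← Real.rpow_add (by positivity)]
  rw [neg_div, neg_add_cancel, Real.rpow_zero]

lemma integrable_heatKernel_mul_norm :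
    Integrable fun y : EuclideanSpace ℝ (Fin N) => heatKernel N y * ‖y‖ := by
  have h := ((integrable_exp_neg_mul_sq_norm (N := N) (b := 1 / 8) (by norm_num)).const_mul
    ((4 * Real.pi) ^ (-(N : ℝ) / 2) * 2))
  refine h.mono' (continuous_heatKernel.mul continuous_norm).aestronglyMeasurable
    (ae_of_all _ fun y => ?_)
  rw [Real.norm_of_nonneg (mul_nonneg (heatKernel_nonneg y) (norm_nonneg y)), heatKernel,
    mul_assoc, mul_assoc]
  refine mul_le_mul_of_nonneg_left ?_ (by positivity)
  -- `r ≤ 2 + r²/8 ≤ 2 exp (r²/8)`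
  have h1 : ‖y‖ ≤ 2 * Real.exp (1 / 8 * ‖y‖ ^ 2) := by
    nlinarith [Real.add_one_le_exp (1 / 8 * ‖y‖ ^ 2), sq_nonneg (‖y‖ - 4), sq_nonneg ‖y‖]
  calc Real.exp (-(1 / 4) * ‖y‖ ^ 2) * ‖y‖
      ≤ Real.exp (-(1 / 4) * ‖y‖ ^ 2) * (2 * Real.exp (1 / 8 * ‖y‖ ^ 2)) := by gcongr
    _ = 2 * (Real.exp (-(1 / 4) * ‖y‖ ^ 2) * Real.exp (1 / 8 * ‖y‖ ^ 2)) := by ring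
    _ = 2 * Real.exp (-(1 / 8) * ‖y‖ ^ 2) := by
      rw [← Real.exp_add]
      ring_nf

lemma hasFDerivAt_heatKernel (y : EuclideanSpace ℝ (Fin N)) :
    HasFDerivAt (heatKernel N) ((-(1 / 2) * heatKernel N y) • innerSL ℝ y) y := by
  have h := ((((hasStrictFDerivAt_norm_sq y).hasFDerivAt.const_mul (-(1 / 4) : ℝ)).exp).const_mul
    ((4 * Real.pi) ^ (-(N : ℝ) / 2)))
  refine h.congr_fderiv ?_
  ext v
  simp [heatKernel]
  ring

lemma fderiv_heatKernel_single (j : Fin N) (y : EuclideanSpace ℝ (Fin N)) :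
    fderiv ℝ (heatKernel N) y (EuclideanSpace.single j 1) = -(1 / 2) * heatKernel N y * y j := by
  rw [(hasFDerivAt_heatKernel y).fderiv]
  simp [EuclideanSpace.inner_single_right]

lemma testFn_exists_bound (f : testFn N) : ∃ C, ∀ x, ‖f.1 x‖ ≤ C :=
  f.2.2.exists_bound_of_continuous f.2.1.continuous

lemma integrable_heatKernel_mul (f : testFn N) (t : ℝ) :
    Integrable fun y => heatKernel N y * f.1 (√t • y) := by
  obtain ⟨C, hC⟩ := testFn_exists_bound f
  have hf := f.2.1.continuous
  exact integrable_heatKernel.mul_bdd (c := C) (by fun_prop) (ae_of_all _ fun y => hC _)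

lemma integrable_heatKernel_mul_coord (f : testFn N) (t : ℝ) (j : Fin N) :
    Integrable fun y => heatKernel N y * y j * f.1 (√t • y) := by
  obtain ⟨C, hC⟩ := testFn_exists_bound f
  have hf := f.2.1.continuous
  have hk := continuous_heatKernel (N := N)
  have h : Integrable fun y : EuclideanSpace ℝ (Fin N) => heatKernel N y * y j := by
    refine integrable_heatKernel_mul_norm.mono' (by fun_prop) (ae_of_all _ fun y => ?_)
    rw [norm_mul, Real.norm_of_nonneg (heatKernel_nonneg y)]
    exact mul_le_mul_of_nonneg_left (PiLp.norm_apply_le y j) (heatKernel_nonneg y)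
  exact h.mul_bdd (c := C) (by fun_prop) (ae_of_all _ fun y => hC _)

/-- Integration by parts against the Gaussian, which turns a factor `y_j` into a derivative. -/
lemma integral_heatKernel_mul_coord (f : testFn N) (t : ℝ) (j : Fin N) :
    ∫ y, heatKernel N y * y j * f.1 (√t • y) =
      2 * √t * ∫ y, heatKernel N y * (pderiv j f).1 (√t • y) := by
  have hd : ∀ y : EuclideanSpace ℝ (Fin N), HasFDerivAt (fun y => f.1 (√t • y))
      ((fderiv ℝ f.1 (√t • y)).comp (√t • ContinuousLinearMap.id ℝ _)) y := fun y =>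
    (testFn_differentiable f _).hasFDerivAt.comp y ((hasFDerivAt_id y).const_smul √t)
  have hg : ∀ y, fderiv ℝ (fun y => f.1 (√t • y)) y (EuclideanSpace.single j 1) =
      √t * (pderiv j f).1 (√t • y) := fun y => by
    rw [(hd y).fderiv, pderiv_apply]
    simp
  have key := integral_mul_fderiv_eq_neg_fderiv_mul_of_integrable (μ := volume)
    (f := heatKernel N) (g := fun y => f.1 (√t • y)) (v := EuclideanSpace.single j (1 : ℝ))
    ?_ ?_ (integrable_heatKernel_mul f t) (fun y _ => (hasFDerivAt_heatKernel y).differentiableAt)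
    (fun y _ => (hd y).differentiableAt)
  · simp only [hg, fderiv_heatKernel_single, ← integral_neg] at key
    have h1 : ∀ y : EuclideanSpace ℝ (Fin N), heatKernel N y * (√t * (pderiv j f).1 (√t • y)) =
        √t * (heatKernel N y * (pderiv j f).1 (√t • y)) := fun y => by ring
    have h2 : ∀ y : EuclideanSpace ℝ (Fin N), -(-(1 / 2) * heatKernel N y * y j * f.1 (√t • y)) =
        1 / 2 * (heatKernel N y * y j * f.1 (√t • y)) := fun y => by ring
    simp only [h1, h2, integral_const_mul] at key
    linarith
  · simp only [fderiv_heatKernel_single]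
    refine ((integrable_heatKernel_mul_coord f t j).const_mul (-(1 / 2))).congr
      (ae_of_all _ fun y => ?_)
    simp only
    ring
  · simp only [hg]
    refine ((integrable_heatKernel_mul (pderiv j f) t).const_mul √t).congr
      (ae_of_all _ fun y => ?_)
    simp only
    ring

lemma fderiv_apply_eq_sum (f : testFn N) (x y : EuclideanSpace ℝ (Fin N)) :
    fderiv ℝ f.1 x y = ∑ j, y j * (pderiv j f).1 x := by
  conv_lhs => rw [← (EuclideanSpace.basisFun (Fin N) ℝ).sum_repr y]
  simp [map_sum, pderiv_apply]

lemma lap_apply (f : testFn N) (x : EuclideanSpace ℝ (Fin N)) :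
    (lap N f).1 x = ∑ j, (pderiv j (pderiv j f)).1 x := by
  rw [lap, LinearMap.sum_apply, Submodule.coe_sum, Finset.sum_apply]
  simp [pow_two]

/-- The heat equation `∂_t u = Δu`, read at the origin. -/
lemma hasDerivAt_heatAtZero (f : testFn N) {t : ℝ} (ht : 0 < t) :
    HasDerivAt (fun s => heatAtZero s f.1) (heatAtZero t (lap N f).1) t := by
  have hfc := f.2.1.continuous
  have hf'c : Continuous (fderiv ℝ f.1) := f.2.1.continuous_fderiv (by simp)
  have hk := continuous_heatKernel (N := N)
  obtain ⟨C, hC⟩ := (f.2.2.fderiv (𝕜 := ℝ)).exists_bound_of_continuous hf'c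
  have key := hasDerivAt_integral_of_dominated_loc_of_deriv_le (μ := volume)
    (F := fun s y => heatKernel N y * f.1 (√s • y))
    (F' := fun s y => heatKernel N y * (fderiv ℝ f.1 (√s • y) y * (1 / (2 * √s))))
    (bound := fun y => heatKernel N y * ‖y‖ * (C * (1 / (2 * √(t / 2)))))
    (s := Set.Ioi (t / 2)) (x₀ := t) (Ioi_mem_nhds (by linarith))
    (Eventually.of_forall fun s => (integrable_heatKernel_mul f s).aestronglyMeasurable)
    (integrable_heatKernel_mul f t) (Continuous.aestronglyMeasurable (by fun_prop)) ?_
    (integrable_heatKernel_mul_norm.mul_const _) ?_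
  · refine key.2.congr_deriv ?_
    have h1 : ∀ y : EuclideanSpace ℝ (Fin N),
        heatKernel N y * (fderiv ℝ f.1 (√t • y) y * (1 / (2 * √t))) =
        ∑ j, 1 / (2 * √t) * (heatKernel N y * y j * (pderiv j f).1 (√t • y)) := fun y => by
      rw [fderiv_apply_eq_sum, Finset.sum_mul, Finset.mul_sum]
      exact Finset.sum_congr rfl fun j _ => by ring
    have h2 : heatAtZero t (lap N f).1 =
        ∑ j, ∫ y, heatKernel N y * (pderiv j (pderiv j f)).1 (√t • y) := by
      simp only [heatAtZero, lap_apply, Finset.mul_sum]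
      exact integral_finsetSum _ fun j _ => integrable_heatKernel_mul _ t
    simp only [h1]
    rw [integral_finsetSum _ fun j _ => (integrable_heatKernel_mul_coord _ t j).const_mul _, h2]
    refine Finset.sum_congr rfl fun j _ => ?_
    rw [integral_const_mul, integral_heatKernel_mul_coord]
    have : √t ≠ 0 := (Real.sqrt_pos.2 ht).ne'
    field_simp
  · refine ae_of_all _ fun y s hs => ?_
    have hs' : t / 2 < s := hs
    have h0 : 0 < √(t / 2) := Real.sqrt_pos.2 (by linarith)
    have h1 : √(t / 2) ≤ √s := Real.sqrt_le_sqrt hs'.le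
    have hC0 : 0 ≤ C := (norm_nonneg _).trans (hC 0)
    rw [norm_mul, norm_mul, Real.norm_of_nonneg (heatKernel_nonneg y),
      Real.norm_of_nonneg (show 0 ≤ 1 / (2 * √s) by positivity), mul_assoc]
    refine mul_le_mul_of_nonneg_left ?_ (heatKernel_nonneg y)
    calc ‖fderiv ℝ f.1 (√s • y) y‖ * (1 / (2 * √s))
        ≤ (C * ‖y‖) * (1 / (2 * √(t / 2))) := by
          gcongr
          exact ContinuousLinearMap.le_of_opNorm_le _ (hC _) y
      _ = ‖y‖ * (C * (1 / (2 * √(t / 2)))) := by ring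
  · refine ae_of_all _ fun y s hs => ?_
    have hs' : s ≠ 0 := (lt_trans (half_pos ht) hs).ne'
    have h1 : HasDerivAt (fun s => √s • y) ((1 / (2 * √s)) • y) s :=
      (Real.hasDerivAt_sqrt hs').smul_const y
    have h2 := ((testFn_differentiable f (√s • y)).hasFDerivAt.comp_hasDerivAt s h1).const_mul
      (heatKernel N y)
    refine h2.congr_deriv ?_
    rw [map_smul, smul_eq_mul, mul_comm (1 / (2 * √s))]

lemma tendsto_heatAtZero (f : testFn N) :
    Tendsto (fun t => heatAtZero t f.1) (𝓝[>] 0) (𝓝 (f.1 0)) := by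
  obtain ⟨C, hC⟩ := testFn_exists_bound f
  have hfc := f.2.1.continuous
  have h : ∫ y, heatKernel N y * f.1 0 = f.1 0 := by
    rw [integral_mul_const, integral_heatKernel, one_mul]
  rw [← h]
  refine tendsto_integral_filter_of_dominated_convergence (fun y => heatKernel N y * C)
    (Eventually.of_forall fun t => (integrable_heatKernel_mul f t).aestronglyMeasurable)
    (Eventually.of_forall fun t => ae_of_all _ fun y => ?_)
    (integrable_heatKernel.mul_const C) (ae_of_all _ fun y => ?_)
  · rw [norm_mul, Real.norm_of_nonneg (heatKernel_nonneg y)]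
    exact mul_le_mul_of_nonneg_left (hC _) (heatKernel_nonneg y)
  · have hc : Continuous fun t : ℝ => heatKernel N y * f.1 (√t • y) := by fun_prop
    simpa using (hc.tendsto 0).mono_left nhdsWithin_le_nhds

/-- If `Δ^k f` vanishes at the origin for `k < i`, then `u(t) / t^i → Δ^i f(0) / i!`: by the heat
equation, L'Hôpital's rule reduces `(i + 1, f)` to `(i, Δf)`. -/
lemma tendsto_heatAtZero_div_pow (i : ℕ) (f : testFn N)
    (h : ∀ k < i, ((lap N ^ k) f).1 0 = 0) :
    Tendsto (fun t => heatAtZero t f.1 / t ^ i) (𝓝[>] 0)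
      (𝓝 (((lap N ^ i) f).1 0 / (i.factorial : ℝ))) := by
  induction i generalizing f with
  | zero => simpa using tendsto_heatAtZero f
  | succ i ih =>
    have hpow : ∀ k, (lap N ^ k) (lap N f) = (lap N ^ (k + 1)) f := fun k => by
      rw [pow_succ, Module.End.mul_apply]
    have ih' := ih (lap N f) fun k hk => by
      rw [hpow]
      exact h (k + 1) (by omega)
    rw [hpow] at ih'
    refine HasDerivAt.lhopital_zero_nhdsGT (f' := fun t => heatAtZero t (lap N f).1)
      (g' := fun t => ((i + 1 : ℕ) : ℝ) * t ^ i) ?_ ?_ ?_ ?_ ?_ ?_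
    · filter_upwards [self_mem_nhdsWithin] with t ht using hasDerivAt_heatAtZero f ht
    · exact Eventually.of_forall fun t => by simpa using hasDerivAt_pow (i + 1) t
    · filter_upwards [self_mem_nhdsWithin] with t ht
      have ht' : (0 : ℝ) < t := ht
      positivity
    · have h0 : f.1 0 = 0 := by simpa using h 0 (by omega)
      simpa [h0] using tendsto_heatAtZero f
    · have hc : Continuous fun t : ℝ => t ^ (i + 1) := by fun_prop
      simpa using (hc.tendsto 0).mono_left nhdsWithin_le_nhds
    · have h1 := ih'.div_const ((i + 1 : ℕ) : ℝ)
      rw [div_div, mul_comm, ← Nat.cast_mul, ← Nat.factorial_succ] at h1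
      refine h1.congr fun t => ?_
      rw [div_div, mul_comm]

/-- The change of variables `x = √t y`. -/
lemma heatAtZero_eq (f : EuclideanSpace ℝ (Fin N) → ℝ) {t : ℝ} (ht : 0 < t) :
    heatAtZero t f = (4 * Real.pi * t) ^ (-(N : ℝ) / 2) *
      ∫ x : EuclideanSpace ℝ (Fin N), Real.exp (-‖x‖ ^ 2 / (4 * t)) * f x := by
  have h := Measure.integral_comp_smul_of_nonneg (volume : Measure (EuclideanSpace ℝ (Fin N)))
    (fun x => Real.exp (-‖x‖ ^ 2 / (4 * t)) * f x) √t (hR := Real.sqrt_nonneg t)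
  have h1 : ∀ y : EuclideanSpace ℝ (Fin N), -‖√t • y‖ ^ 2 / (4 * t) = -(1 / 4) * ‖y‖ ^ 2 := by
    intro y
    rw [norm_smul, mul_pow, Real.norm_of_nonneg (Real.sqrt_nonneg t), Real.sq_sqrt ht.le]
    field_simp
  simp only [h1, finrank_euclideanSpace_fin, smul_eq_mul] at h
  simp only [heatAtZero, heatKernel, mul_assoc, integral_const_mul]
  rw [h, ← mul_assoc 4, Real.mul_rpow (by positivity) ht.le, mul_assoc]
  congr 2
  rw [Real.sqrt_eq_rpow, ← Real.rpow_natCast, ← Real.rpow_mul ht.le, ← Real.rpow_neg ht.le]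
  congr 1
  ring

end Helpers

/-- If `φ` is smooth and compactly supported and `(∂^α φ)(0) = 0` for every
even multiindex `α` with `|α| < 2i`, then
`(4πt)^{-N/2} t^{-i} ∫ exp(-‖x‖²/4t) φ(x) dx → Σ_{|α|=2i, α even} (∂^α φ)(0)/(α/2)!`
as `t → 0⁺`. -/
theorem gaussian_integral_asymptotic (N : ℕ) (hN : 1 ≤ N) (i : ℕ)
    (φ : EuclideanSpace ℝ (Fin N) → ℝ)
    (hφ : ContDiff ℝ (⊤ : ℕ∞) φ) (hφc : HasCompactSupport φ)
    (hvanish : ∀ α : Fin N → ℕ, (∀ j, Even (α j)) → ∑ j, α j < 2 * i →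
      multiPartialDeriv N α φ 0 = 0) :
    Tendsto (fun t : ℝ => (4 * Real.pi * t) ^ (-(N : ℝ) / 2) * t ^ (-(i : ℤ)) *
        ∫ x : EuclideanSpace ℝ (Fin N), Real.exp (-‖x‖ ^ 2 / (4 * t)) * φ x)
      (𝓝[>] 0)
      (𝓝 (∑ α ∈ (Finset.Nat.antidiagonalTuple N (2 * i)).filter (fun α => ∀ j, Even (α j)),
            multiPartialDeriv N α φ 0 / ((∏ j, Nat.factorial (α j / 2) : ℕ) : ℝ))) := by
  have h := tendsto_heatAtZero_div_pow i (⟨φ, hφ, hφc⟩ : testFn N) fun k hk => by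
    rw [lap_pow_apply]
    refine Finset.sum_eq_zero fun β hβ => ?_
    simp only [Finset.mem_piAntidiag] at hβ
    rw [hvanish _ (fun j => even_two_mul (β j)) (by rw [← Finset.mul_sum, hβ.1]; omega), mul_zero]
  rw [lap_pow_div_factorial] at h
  refine h.congr' ?_
  filter_upwards [self_mem_nhdsWithin] with t ht
  rw [heatAtZero_eq φ ht, zpow_neg, zpow_natCast]
  ring
end
end
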